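/- arXiv:2605.19691 — 4 statements merged into one kernel-verified Lean document; each statement's English description precedes it below -/
import Mathlib

section
/- Let F be a finite field and let B₁,…,B_k ∈ F^{m×n} be a linearly independent family of matrices generating a matrix rank-metric code C = span_F{B₁,…,B_k} that is column-nondegenerate and row-nondegenerate, faithful (every nonzero element of the associated column-system S has rank m), and one-weight (there is d ≥ 1 with rank(M) = d for every nonzero M ∈ C). Then k = max{m,n} and d = min{m,n}. -/
open Matrix

section Defs

variable {K : Type*} [Field K]

/-- The row space of a matrix: the span of its rows in `K^b`. -/
noncomputable def rowSpace {a b : ℕ} (M : Matrix (Fin a) (Fin b) K) :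
    Submodule K (Fin b → K) :=
  Submodule.span K (Set.range fun i => M i)

/-- The column space of a matrix: the span of its columns in `K^a`. -/
noncomputable def colSpace {a b : ℕ} (M : Matrix (Fin a) (Fin b) K) :
    Submodule K (Fin a → K) :=
  Submodule.span K (Set.range fun j i => M i j)

/-- `Sc S U = {X ∈ S : colsp(X) ⊆ U}`, a subspace of the matrix space. -/
noncomputable def Sc {a b : ℕ} (S : Submodule K (Matrix (Fin a) (Fin b) K))
    (U : Submodule K (Fin a → K)) : Submodule K (Matrix (Fin a) (Fin b) K) where
  carrier := {X | X ∈ S ∧ colSpace X ≤ U}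
  add_mem' := by
    rintro X Y ⟨hXS, hXU⟩ ⟨hYS, hYU⟩
    refine ⟨S.add_mem hXS hYS, ?_⟩
    rw [colSpace, Submodule.span_le]
    rintro v ⟨j, rfl⟩
    have hx : (fun i => X i j) ∈ U := hXU (Submodule.subset_span ⟨j, rfl⟩)
    have hy : (fun i => Y i j) ∈ U := hYU (Submodule.subset_span ⟨j, rfl⟩)
    exact U.add_mem hx hy
  zero_mem' := by
    refine ⟨S.zero_mem, ?_⟩
    rw [colSpace, Submodule.span_le]
    rintro v ⟨j, rfl⟩
    exact U.zero_mem
  smul_mem' := by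
    rintro c X ⟨hXS, hXU⟩
    refine ⟨S.smul_mem c hXS, ?_⟩
    rw [colSpace, Submodule.span_le]
    rintro v ⟨j, rfl⟩
    exact U.smul_mem c (hXU (Submodule.subset_span ⟨j, rfl⟩))

/-- `Sr S U = {X ∈ S : rowsp(X) ⊆ U}`, a subspace of the matrix space. -/
noncomputable def Sr {a b : ℕ} (S : Submodule K (Matrix (Fin a) (Fin b) K))
    (U : Submodule K (Fin b → K)) : Submodule K (Matrix (Fin a) (Fin b) K) where
  carrier := {X | X ∈ S ∧ rowSpace X ≤ U}
  add_mem' := by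
    rintro X Y ⟨hXS, hXU⟩ ⟨hYS, hYU⟩
    refine ⟨S.add_mem hXS hYS, ?_⟩
    rw [rowSpace, Submodule.span_le]
    rintro v ⟨i, rfl⟩
    have hx : X i ∈ U := hXU (Submodule.subset_span ⟨i, rfl⟩)
    have hy : Y i ∈ U := hYU (Submodule.subset_span ⟨i, rfl⟩)
    exact U.add_mem hx hy
  zero_mem' := by
    refine ⟨S.zero_mem, ?_⟩
    rw [rowSpace, Submodule.span_le]
    rintro v ⟨i, rfl⟩
    exact U.zero_mem
  smul_mem' := by
    rintro c X ⟨hXS, hXU⟩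
    refine ⟨S.smul_mem c hXS, ?_⟩
    rw [rowSpace, Submodule.span_le]
    rintro v ⟨i, rfl⟩
    exact U.smul_mem c (hXU (Submodule.subset_span ⟨i, rfl⟩))

/-- Row support of a set of matrices: the sum of the row spaces of its elements. -/
noncomputable def rowSupport {a b : ℕ} (D : Submodule K (Matrix (Fin a) (Fin b) K)) :
    Submodule K (Fin b → K) :=
  ⨆ M ∈ D, rowSpace M

/-- Column support of a set of matrices: the sum of the column spaces of its elements. -/
noncomputable def colSupport {a b : ℕ} (D : Submodule K (Matrix (Fin a) (Fin b) K)) :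
    Submodule K (Fin a → K) :=
  ⨆ M ∈ D, colSpace M

/-- The hyperplane `u^⊥ = {v : ∑ i, u i * v i = 0}`. -/
noncomputable def perp {a : ℕ} (u : Fin a → K) : Submodule K (Fin a → K) where
  carrier := {v | ∑ i, u i * v i = 0}
  add_mem' := by
    intro v w hv hw
    simp only [Set.mem_setOf_eq, Pi.add_apply, mul_add, Finset.sum_add_distrib] at *
    simp [hv, hw]
  zero_mem' := by simp
  smul_mem' := by
    intro c v hv
    simp only [Set.mem_setOf_eq, Pi.smul_apply, smul_eq_mul] at *
    have : ∑ i, u i * (c * v i) = c * ∑ i, u i * v i := by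
      rw [Finset.mul_sum]; congr 1; ext i; ring
    simp [this, hv]

/-- The orthogonal complement `U^⊥ = {v : ∀ u ∈ U, ∑ i, u i * v i = 0}`. -/
noncomputable def perpSub {a : ℕ} (U : Submodule K (Fin a → K)) : Submodule K (Fin a → K) :=
  ⨅ u ∈ U, perp u

/-- The slices of the column-system: `(X l) i j = (B i) j l`. -/
def colSlices {m n k : ℕ} (B : Fin k → Matrix (Fin m) (Fin n) K) :
    Fin n → Matrix (Fin k) (Fin m) K :=
  fun l => Matrix.of fun i j => B i j l

/-- The slices of the row-system: `(Y j) l i = (B i) j l`. -/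
def rowSlices {m n k : ℕ} (B : Fin k → Matrix (Fin m) (Fin n) K) :
    Fin m → Matrix (Fin n) (Fin k) K :=
  fun j => Matrix.of fun l i => B i j l

/-- The linear map `u ↦ ∑ i, u i • B i` (i.e. `u ↦ m₁(T,u)`). -/
noncomputable def combMap {m n k : ℕ} (B : Fin k → Matrix (Fin m) (Fin n) K) :
    (Fin k → K) →ₗ[K] Matrix (Fin m) (Fin n) K where
  toFun u := ∑ i, u i • B i
  map_add' := by intro u v; simp [add_smul, Finset.sum_add_distrib]
  map_smul' := by intro c u; simp [smul_smul, Finset.smul_sum]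

/-- The `t`-th row-generalized rank weight. -/
noncomputable def dRow {a b : ℕ} (C : Submodule K (Matrix (Fin a) (Fin b) K)) (t : ℕ) : ℕ :=
  sInf {r | ∃ D : Submodule K (Matrix (Fin a) (Fin b) K),
    D ≤ C ∧ Module.finrank K D = t ∧ Module.finrank K (rowSupport D) = r}

/-- The `t`-th column-generalized rank weight. -/
noncomputable def dCol {a b : ℕ} (C : Submodule K (Matrix (Fin a) (Fin b) K)) (t : ℕ) : ℕ :=
  sInf {r | ∃ D : Submodule K (Matrix (Fin a) (Fin b) K),
    D ≤ C ∧ Module.finrank K D = t ∧ Module.finrank K (colSupport D) = r}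

end Defs

theorem Matrix.card_vecMul_eq_zero_mul_pow_rank {F : Type*} [Field F] [Fintype F] [DecidableEq F]
    {a b : ℕ} (A : Matrix (Fin a) (Fin b) F) :
    (Finset.univ.filter fun u : Fin a → F => u ᵥ* A = 0).card * Fintype.card F ^ A.rank =
      Fintype.card F ^ a := by
  have hcard : (Finset.univ.filter fun u : Fin a → F => u ᵥ* A = 0).card =
      Nat.card (LinearMap.ker (Aᵀ).mulVecLin) := by
    rw [← Fintype.card_subtype, ← Nat.card_eq_fintype_card]
    refine Nat.card_congr (Equiv.subtypeEquivRight fun u => ?_)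
    simp
  have hdim := (Aᵀ).mulVecLin.finrank_range_add_finrank_ker
  rw [Module.finrank_fin_fun] at hdim
  change (Aᵀ).rank + _ = a at hdim
  rw [rank_transpose] at hdim
  rw [hcard, Module.natCard_eq_pow_finrank (K := F), Nat.card_eq_fintype_card, ← pow_add,
    add_comm, hdim]

/-- Double counting of the pairs `(u, v)` with `v ᵥ* M u = 0`. -/
theorem card_bilinear_zeros_eq {F : Type*} [Field F] [Fintype F] {m n k d : ℕ}
    (M : (Fin k → F) → Matrix (Fin m) (Fin n) F) (Y : (Fin m → F) → Matrix (Fin k) (Fin n) F)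
    (hMY : ∀ u v, v ᵥ* M u = u ᵥ* Y v) (hM : ∀ u, u ≠ 0 → (M u).rank = d)
    (hY : ∀ v, v ≠ 0 → (Y v).rank = n) :
    (Fintype.card F : ℤ) ^ (n + m) * (Fintype.card F ^ d + Fintype.card F ^ k - 1) =
      (Fintype.card F : ℤ) ^ (d + k) * (Fintype.card F ^ n + Fintype.card F ^ m - 1) := by
  classical
  set q := Fintype.card F
  have hcomm : ∑ u : Fin k → F, (Finset.univ.filter fun v : Fin m → F => v ᵥ* M u = 0).card =
      ∑ v : Fin m → F, (Finset.univ.filter fun u : Fin k → F => u ᵥ* Y v = 0).card := by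
    simp only [Finset.card_filter, hMY]
    exact Finset.sum_comm
  have hM0 (v : Fin m → F) : v ᵥ* M 0 = 0 := by simp [hMY]
  have hY0 (u : Fin k → F) : u ᵥ* Y 0 = 0 := by simp [← hMY]
  have hleft : (∑ u : Fin k → F, (Finset.univ.filter fun v : Fin m → F => v ᵥ* M u = 0).card)
      * q ^ d = q ^ m * q ^ d + (q ^ k - 1) * q ^ m := by
    rw [Finset.sum_mul, ← Finset.add_sum_erase _ _ (Finset.mem_univ 0)]
    congr 1
    · simp [hM0, q]
    · rw [Finset.sum_congr rfl (g := fun _ => q ^ m)]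
      · simp [q, Finset.card_erase_of_mem]
      · intro u hu
        rw [← hM u (Finset.ne_of_mem_erase hu)]
        exact card_vecMul_eq_zero_mul_pow_rank _
  have hright : (∑ v : Fin m → F, (Finset.univ.filter fun u : Fin k → F => u ᵥ* Y v = 0).card)
      * q ^ n = q ^ k * q ^ n + (q ^ m - 1) * q ^ k := by
    rw [Finset.sum_mul, ← Finset.add_sum_erase _ _ (Finset.mem_univ 0)]
    congr 1
    · simp [hY0, q]
    · rw [Finset.sum_congr rfl (g := fun _ => q ^ k)]
      · simp [q, Finset.card_erase_of_mem]
      · intro v hv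
        have h := card_vecMul_eq_zero_mul_pow_rank (Y v)
        rwa [hY v (Finset.ne_of_mem_erase hv)] at h
  rw [hcomm] at hleft
  have hq : 0 < q := Fintype.card_pos
  zify [Nat.one_le_pow k q hq] at hleft
  zify [Nat.one_le_pow m q hq] at hright
  simp only [pow_add]
  linear_combination (-(q : ℤ) ^ n) * hleft + (q : ℤ) ^ d * hright

theorem exponent_le_of_pow_mul_eq {q : ℤ} (hq : 1 < q) {a b c d e f : ℕ} (hc : 0 < c)
    (hd : 0 < d) (h : q ^ a * (q ^ c + q ^ d - 1) = q ^ b * (q ^ e + q ^ f - 1)) : b ≤ a := by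
  have hcop : IsCoprime (q ^ b) (q ^ c + q ^ d - 1) := by
    refine IsCoprime.pow_left ⟨q ^ (c - 1) + q ^ (d - 1), -1, ?_⟩
    rw [add_mul, pow_sub_one_mul hc.ne', pow_sub_one_mul hd.ne']
    ring
  have hdvd : q ^ b ∣ q ^ a := hcop.dvd_of_dvd_mul_right (Dvd.intro _ h.symm)
  have hpos : 0 < q ^ a := by positivity
  exact (pow_le_pow_iff_right₀ hq).1 (Int.le_of_dvd hpos hdvd)

theorem eq_min_of_pow_add_pow_eq {q : ℤ} (hq : 1 < q) {m n k d : ℕ} (hdm : d ≤ m) (hdn : d ≤ n)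
    (hk : n + m = d + k) (h : q ^ d + q ^ k = q ^ n + q ^ m) : d = min m n := by
  by_contra hne
  have hm : d + 1 ≤ m := by omega
  have hn : d + 1 ≤ n := by omega
  have hdvd : q ^ (d + 1) ∣ q ^ d := by
    rw [eq_sub_of_add_eq h]
    exact dvd_sub (dvd_add (pow_dvd_pow q hn) (pow_dvd_pow q hm)) (pow_dvd_pow q (by omega))
  have hpos : 0 < q ^ d := by positivity
  have := (pow_le_pow_iff_right₀ hq).1 (Int.le_of_dvd hpos hdvd)
  omega

theorem eq_zero_of_rowSupport_eq_top {K : Type*} [Field K] {a b : ℕ}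
    {D : Submodule K (Matrix (Fin a) (Fin b) K)} (hD : rowSupport D = ⊤) {w : Fin b → K}
    (hw : ∀ M ∈ D, M *ᵥ w = 0) : w = 0 := by
  have hle : rowSupport D ≤ perp w := by
    refine iSup₂_le fun M hM => ?_
    rw [rowSpace, Submodule.span_le]
    rintro _ ⟨i, rfl⟩
    have h := congrFun (hw M hM) i
    change ∑ j, w j * M i j = 0
    simpa [mulVec, dotProduct, mul_comm] using h
  ext j
  have hj : (Pi.single j 1 : Fin b → K) ∈ perp w := hle (hD ▸ Submodule.mem_top)
  change ∑ i, w i * (Pi.single j 1 : Fin b → K) i = 0 at hj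
  simpa [Pi.single_apply] using hj

theorem Matrix.mulVec_injective_of_rank_eq {K : Type*} [Field K] {a b : ℕ}
    {A : Matrix (Fin a) (Fin b) K} (hA : A.rank = b) : Function.Injective A.mulVec := by
  have hdim := A.mulVecLin.finrank_range_add_finrank_ker
  rw [Module.finrank_fin_fun] at hdim
  change A.rank + _ = b at hdim
  exact LinearMap.ker_eq_bot.1
    (Submodule.finrank_eq_zero.1 (by omega : Module.finrank K (LinearMap.ker A.mulVecLin) = 0))

theorem Matrix.rank_eq_of_mulVec_eq_zero {K : Type*} [Field K] {a b : ℕ}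
    {A : Matrix (Fin a) (Fin b) K} (hA : ∀ w, A *ᵥ w = 0 → w = 0) : A.rank = b := by
  have hker : LinearMap.ker A.mulVecLin = ⊥ := LinearMap.ker_eq_bot'.2 hA
  have hdim := A.mulVecLin.finrank_range_add_finrank_ker
  rwa [Module.finrank_fin_fun, hker, finrank_bot, add_zero] at hdim

/-- Contraction of the tensor of `B` in the row index. -/
def rowContraction {K : Type*} [Field K] {m n k : ℕ} (B : Fin k → Matrix (Fin m) (Fin n) K)
    (v : Fin m → K) : Matrix (Fin k) (Fin n) K :=
  Matrix.of fun i => v ᵥ* B i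

theorem vecMul_combMap {K : Type*} [Field K] {m n k : ℕ} (B : Fin k → Matrix (Fin m) (Fin n) K)
    (u : Fin k → K) (v : Fin m → K) : v ᵥ* combMap B u = u ᵥ* rowContraction B v := by
  ext l
  simp only [combMap, LinearMap.coe_mk, AddHom.coe_mk, vecMul, dotProduct, rowContraction,
    of_apply, Matrix.sum_apply, Matrix.smul_apply, smul_eq_mul, Finset.mul_sum]
  rw [Finset.sum_comm]
  exact Finset.sum_congr rfl fun i _ => Finset.sum_congr rfl fun j _ => by ring

theorem rowContraction_mulVec {K : Type*} [Field K] {m n k : ℕ}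
    (B : Fin k → Matrix (Fin m) (Fin n) K) (v : Fin m → K) (w : Fin n → K) :
    rowContraction B v *ᵥ w = (∑ l, w l • colSlices B l) *ᵥ v := by
  ext i
  simp only [mulVec, vecMul, dotProduct, rowContraction, colSlices, of_apply, Matrix.sum_apply,
    Matrix.smul_apply, smul_eq_mul, Finset.sum_mul]
  rw [Finset.sum_comm]
  exact Finset.sum_congr rfl fun i _ => Finset.sum_congr rfl fun j _ => by ring

theorem sum_smul_colSlices_apply {K : Type*} [Field K] {m n k : ℕ}
    (B : Fin k → Matrix (Fin m) (Fin n) K) (w : Fin n → K) (i : Fin k) :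
    (∑ l, w l • colSlices B l) i = B i *ᵥ w := by
  ext j
  simp [colSlices, Matrix.sum_apply, mulVec, dotProduct, mul_comm]

theorem sum_smul_colSlices_ne_zero {K : Type*} [Field K] {m n k : ℕ}
    {B : Fin k → Matrix (Fin m) (Fin n) K}
    (hB : rowSupport (Submodule.span K (Set.range B)) = ⊤) {w : Fin n → K} (hw : w ≠ 0) :
    ∑ l, w l • colSlices B l ≠ 0 := by
  refine fun h0 => hw (eq_zero_of_rowSupport_eq_top hB fun M hM => ?_)
  induction hM using Submodule.span_induction with
  | mem M hM =>
    obtain ⟨i, rfl⟩ := hM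
    rw [← sum_smul_colSlices_apply, h0]
    rfl
  | zero => exact zero_mulVec w
  | add M N _ _ hM hN => rw [add_mulVec, hM, hN, add_zero]
  | smul c M _ hM => rw [smul_mulVec, hM, smul_zero]

/-- A faithful one-weight (column- and row-nondegenerate) `[m×n,k,d]_q` code
satisfies `k = max{m,n}` and `d = min{m,n}`. -/
theorem stmt15 {F : Type*} [Field F] [Fintype F] {m n k d : ℕ}
    (hm : 0 < m) (hn : 0 < n) (hk : 0 < k) (hd : 1 ≤ d)
    (B : Fin k → Matrix (Fin m) (Fin n) F) (hB : LinearIndependent F B)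
    (C : Submodule F (Matrix (Fin m) (Fin n) F))
    (hC : C = Submodule.span F (Set.range B))
    (hcolnd : rowSupport C = ⊤) (hrownd : colSupport C = ⊤)
    (S : Submodule F (Matrix (Fin k) (Fin m) F))
    (hS : S = Submodule.span F (Set.range (colSlices B)))
    (hfaithful : ∀ X ∈ S, X ≠ 0 → X.rank = m)
    (hone : ∀ M ∈ C, M ≠ 0 → M.rank = d) :
    k = max m n ∧ d = min m n := by
  subst hC hS
  have hM (u : Fin k → F) (hu : u ≠ 0) : (combMap B u).rank = d := by
    have hmem : ∑ i, u i • B i ∈ Submodule.span F (Set.range B) :=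
      Submodule.sum_mem _ fun i _ =>
        Submodule.smul_mem _ (u i) (Submodule.subset_span (Set.mem_range_self i))
    refine hone _ hmem fun h0 => hu ?_
    ext i
    exact Fintype.linearIndependent_iff.1 hB u h0 i
  have hY (v : Fin m → F) (hv : v ≠ 0) : (rowContraction B v).rank = n := by
    refine rank_eq_of_mulVec_eq_zero fun w hw => ?_
    by_contra hw0
    have hrank := hfaithful _ (Submodule.sum_mem _ fun l _ =>
      Submodule.smul_mem _ (w l) (Submodule.subset_span (Set.mem_range_self l)))
      (sum_smul_colSlices_ne_zero hcolnd hw0)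
    rw [rowContraction_mulVec] at hw
    exact hv (mulVec_injective_of_rank_eq hrank (hw.trans (mulVec_zero _).symm))
  have hcount := card_bilinear_zeros_eq _ _ (vecMul_combMap B) hM hY
  have hq : (1 : ℤ) < Fintype.card F := by exact_mod_cast Fintype.one_lt_card
  have hsum : n + m = d + k := le_antisymm
    (exponent_le_of_pow_mul_eq hq hn hm hcount.symm) (exponent_le_of_pow_mul_eq hq hd hk hcount)
  rw [hsum] at hcount
  have hpow := mul_left_cancel₀ (pow_ne_zero _ (by positivity)) hcount
  have hrank := hone (B ⟨0, hk⟩) (Submodule.subset_span ⟨_, rfl⟩) (hB.ne_zero _)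
  have hdm : d ≤ m := hrank ▸ (B ⟨0, hk⟩).rank_le_height
  have hdn : d ≤ n := hrank ▸ (B ⟨0, hk⟩).rank_le_width
  have hmin := eq_min_of_pow_add_pow_eq hq hdm hdn hsum (by linarith)
  omega
end

section
/- (Knuth.) Let F be a finite field and let B₁,…,B_n ∈ F^{n×n} be a linearly independent family of matrices generating a code C = span_F{B₁,…,B_n} such that every nonzero M ∈ C has rank(M) = n. Then the column-system slices X₁,…,X_n and the row-system slices Y₁,…,Y_n are each linearly independent families, and every nonzero element of S = span_F{X₁,…,X_n} has rank n and every nonzero element of T = span_F{Y₁,…,Y_n} has rank n. -/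
open Matrix

section RankCriteria

variable {F : Type*} [Field F] {n : ℕ}

theorem rank_eq_of_mulVec_ne_zero (M : Matrix (Fin n) (Fin n) F)
    (h : ∀ v, v ≠ 0 → M *ᵥ v ≠ 0) : M.rank = n := by
  have hdet : M.det ≠ 0 := fun h0 => by
    obtain ⟨v, hv, hMv⟩ := Matrix.exists_mulVec_eq_zero_iff.mpr h0
    exact h v hv hMv
  simpa using Matrix.rank_of_isUnit M ((Matrix.isUnit_iff_isUnit_det M).mpr hdet.isUnit)

theorem mulVec_ne_zero_of_rank_eq (M : Matrix (Fin n) (Fin n) F) (h : M.rank = n)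
    (v : Fin n → F) (hv : v ≠ 0) : M *ᵥ v ≠ 0 := fun h0 => by
  have hker := M.mulVecLin.finrank_range_add_finrank_ker
  rw [← Matrix.rank, h, Module.finrank_fin_fun, Nat.add_eq_left, Submodule.finrank_eq_zero] at hker
  exact hv ((Submodule.mem_bot F).mp (hker ▸ (LinearMap.mem_ker.mpr h0)))

/-- If every nontrivial combination of a family of `n × n` matrices has rank `n > 0`, the family
is linearly independent and every nonzero element of its span has rank `n`. -/
theorem linearIndependent_and_rank_eq_of_sum_smul {ι : Type*} [Fintype ι] (hn : 0 < n)
    (A : ι → Matrix (Fin n) (Fin n) F) (h : ∀ w : ι → F, w ≠ 0 → (∑ l, w l • A l).rank = n) :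
    LinearIndependent F A ∧ ∀ X ∈ Submodule.span F (Set.range A), X ≠ 0 → X.rank = n := by
  refine ⟨Fintype.linearIndependent_iff.mpr fun w hw => ?_, fun X hX hX0 => ?_⟩
  · by_contra hne
    have hrank := h w fun h0 => hne fun i => congrFun h0 i
    rw [hw, Matrix.rank_zero] at hrank
    exact hn.ne hrank
  · obtain ⟨w, rfl⟩ := (Submodule.mem_span_range_iff_exists_fun F).mp hX
    exact h w fun h0 => hX0 (by simp [h0])

/-- Pairing a combination of the column slices with `u` on the left is applying the combination of
the `B i` with coefficients `u`. -/
theorem sum_smul_colSlices_transpose_mulVec (B : Fin n → Matrix (Fin n) (Fin n) F)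
    (u w : Fin n → F) :
    (∑ l, w l • colSlices B l)ᵀ *ᵥ u = (∑ i, u i • B i) *ᵥ w := by
  ext j
  simp only [Matrix.mulVec, dotProduct, Matrix.transpose_apply, Matrix.sum_apply,
    Matrix.smul_apply, colSlices, Matrix.of_apply, smul_eq_mul, Finset.sum_mul]
  rw [Finset.sum_comm]
  exact Finset.sum_congr rfl fun _ _ => Finset.sum_congr rfl fun _ _ => by ring

/-- Applying a combination of the row slices to `u` is applying the transpose of the combination of
the `B i` with coefficients `u`. -/
theorem sum_smul_rowSlices_mulVec (B : Fin n → Matrix (Fin n) (Fin n) F) (u v : Fin n → F) :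
    (∑ j, v j • rowSlices B j) *ᵥ u = (∑ i, u i • B i)ᵀ *ᵥ v := by
  ext l
  simp only [Matrix.mulVec, dotProduct, Matrix.transpose_apply, Matrix.sum_apply,
    Matrix.smul_apply, rowSlices, Matrix.of_apply, smul_eq_mul, Finset.sum_mul]
  rw [Finset.sum_comm]
  exact Finset.sum_congr rfl fun _ _ => Finset.sum_congr rfl fun _ _ => by ring

end RankCriteria

/-- Knuth: If every nonzero element of `C = span{B₁,…,B_n} ⊆ F^{n×n}` has
rank `n`, then the column-system slices and the row-system slices are each linearly
independent, and every nonzero element of `S` and of `T` has rank `n`. -/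
theorem stmt17 {F : Type*} [Field F] [Fintype F] {n : ℕ} (hn : 0 < n)
    (B : Fin n → Matrix (Fin n) (Fin n) F) (hB : LinearIndependent F B)
    (C : Submodule F (Matrix (Fin n) (Fin n) F))
    (hC : C = Submodule.span F (Set.range B))
    (hrank : ∀ M ∈ C, M ≠ 0 → M.rank = n)
    (S : Submodule F (Matrix (Fin n) (Fin n) F))
    (hS : S = Submodule.span F (Set.range (colSlices B)))
    (T : Submodule F (Matrix (Fin n) (Fin n) F))
    (hT : T = Submodule.span F (Set.range (rowSlices B))) :
    LinearIndependent F (colSlices B) ∧ LinearIndependent F (rowSlices B) ∧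
      (∀ X ∈ S, X ≠ 0 → X.rank = n) ∧ (∀ Y ∈ T, Y ≠ 0 → Y.rank = n) := by
  subst hC hS hT
  have hcomb : ∀ u : Fin n → F, u ≠ 0 → (∑ i, u i • B i).rank = n := fun u hu =>
    hrank _ ((Submodule.mem_span_range_iff_exists_fun F).mpr ⟨u, rfl⟩) fun h0 =>
      hu (funext (Fintype.linearIndependent_iff.mp hB u h0))
  obtain ⟨hX, hS⟩ := linearIndependent_and_rank_eq_of_sum_smul hn (colSlices B) fun w hw => by
    rw [← Matrix.rank_transpose]
    refine rank_eq_of_mulVec_ne_zero _ fun u hu => ?_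
    rw [sum_smul_colSlices_transpose_mulVec]
    exact mulVec_ne_zero_of_rank_eq _ (hcomb u hu) w hw
  obtain ⟨hY, hT⟩ := linearIndependent_and_rank_eq_of_sum_smul hn (rowSlices B) fun v hv =>
    rank_eq_of_mulVec_ne_zero _ fun u hu => by
      rw [sum_smul_rowSlices_mulVec]
      exact mulVec_ne_zero_of_rank_eq _ ((Matrix.rank_transpose _).trans (hcomb u hu)) v hv
  exact ⟨hX, hY, hS, hT⟩
end

section
/- Let K be a field, let B₁,…,B_k ∈ K^{m×n} and B'₁,…,B'_k ∈ K^{m×n} be linearly independent families generating column-nondegenerate codes C = span_K{B₁,…,B_k} and C' = span_K{B'₁,…,B'_k}, and suppose C and C' are equivalent, i.e., there exist A ∈ GL_m(K) and B ∈ GL_n(K) with C' = {Aᵀ M B : M ∈ C}. Then the associated column-systems S and S' are equivalent: there exist P ∈ GL_k(K) and Q ∈ GL_m(K) such that S' = {P X Q : X ∈ S}. -/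
open Matrix

/-- Recombining a finite family by the coefficients of a matrix stays inside its span. -/
theorem span_range_sum_smul_le {K V ι κ : Type*} [Field K] [AddCommGroup V] [Module K V]
    [Fintype ι] (X : ι → V) (U : Matrix ι κ K) :
    Submodule.span K (Set.range fun l => ∑ b, U b l • X b) ≤ Submodule.span K (Set.range X) := by
  rw [Submodule.span_le]
  rintro _ ⟨l, rfl⟩
  exact Submodule.sum_mem _ fun b _ =>
    Submodule.smul_mem _ _ (Submodule.subset_span (Set.mem_range_self b))

/-- Recombining a finite family by an invertible matrix does not change its span. -/
theorem span_range_sum_smul_of_isUnit {K V ι : Type*} [Field K] [AddCommGroup V] [Module K V]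
    [Fintype ι] [DecidableEq ι] (X : ι → V) {U : Matrix ι ι K} (hU : IsUnit U) :
    Submodule.span K (Set.range fun l => ∑ b, U b l • X b) = Submodule.span K (Set.range X) := by
  refine le_antisymm (span_range_sum_smul_le X U) ?_
  obtain ⟨W, hW⟩ := hU.exists_right_inv
  have hX : X = fun c => ∑ l, W l c • ∑ b, U b l • X b := by
    funext c
    simp_rw [Finset.smul_sum, smul_smul]
    rw [Finset.sum_comm]
    have hcoeff : ∀ b, ∑ l, W l c * U b l = (1 : Matrix ι ι K) b c := fun b => by
      rw [← hW, Matrix.mul_apply]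
      exact Finset.sum_congr rfl fun l _ => mul_comm _ _
    simp_rw [← Finset.sum_smul, hcoeff, Matrix.one_apply, ite_smul, one_smul, zero_smul]
    simp
  conv_lhs => rw [hX]
  exact span_range_sum_smul_le (fun l => ∑ b, U b l • X b) W

/-- A matrix expressing a linearly independent family through another family is invertible. -/
theorem isUnit_of_linearIndependent_sum_smul {K V ι : Type*} [Field K] [AddCommGroup V]
    [Module K V] [Fintype ι] [DecidableEq ι] {v w : ι → V} (hv : LinearIndependent K v)
    {P : Matrix ι ι K} (hP : ∀ i, v i = ∑ p, P i p • w p) : IsUnit P := by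
  rw [← Matrix.vecMul_injective_iff_isUnit, ← Matrix.coe_vecMulLinear,
    injective_iff_map_eq_zero]
  intro g hg
  refine funext (Fintype.linearIndependent_iff.mp hv g ?_)
  simp_rw [hP, Finset.smul_sum, smul_smul]
  rw [Finset.sum_comm]
  simp_rw [← Finset.sum_smul]
  refine Finset.sum_eq_zero fun p _ => ?_
  have hgp : ∑ i, g i * P i p = 0 := congrFun hg p
  rw [hgp, zero_smul]

/-- The column slices of a family transformed by `M ↦ Aᵀ * M * U` and a change of generators. -/
theorem colSlices_eq_sum_smul {K : Type*} [Field K] {m n k : ℕ}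
    {B B' : Fin k → Matrix (Fin m) (Fin n) K} {P : Matrix (Fin k) (Fin k) K}
    {A : Matrix (Fin m) (Fin m) K} {U : Matrix (Fin n) (Fin n) K}
    (h : ∀ i, B' i = ∑ p, P i p • (Aᵀ * B p * U)) (l : Fin n) :
    colSlices B' l = ∑ b, U b l • (P * colSlices B b * A) := by
  ext i j
  simp only [colSlices, h, Matrix.of_apply, Matrix.sum_apply, Matrix.smul_apply,
    Matrix.mul_apply, Matrix.transpose_apply, smul_eq_mul, Finset.mul_sum, Finset.sum_mul]
  rw [Finset.sum_comm]
  refine Finset.sum_congr rfl fun b _ => ?_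
  rw [Finset.sum_comm]
  exact Finset.sum_congr rfl fun a _ => Finset.sum_congr rfl fun p _ => by ring

/-- If two column-nondegenerate codes `C, C'` are equivalent via
`C' = {Aᵀ M B₂ : M ∈ C}` with `A ∈ GL_m(K)`, `B₂ ∈ GL_n(K)`, then the associated
column-systems `S, S'` are equivalent: `S' = {P X Q : X ∈ S}` for some `P ∈ GL_k(K)`,
`Q ∈ GL_m(K)`. -/
theorem stmt18 {K : Type*} [Field K] {m n k : ℕ}
    (hm : 0 < m) (hn : 0 < n) (hk : 0 < k)
    (B B' : Fin k → Matrix (Fin m) (Fin n) K)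
    (hB : LinearIndependent K B) (hB' : LinearIndependent K B')
    (C C' : Submodule K (Matrix (Fin m) (Fin n) K))
    (hC : C = Submodule.span K (Set.range B))
    (hC' : C' = Submodule.span K (Set.range B'))
    (hndC : rowSupport C = ⊤) (hndC' : rowSupport C' = ⊤)
    (S S' : Submodule K (Matrix (Fin k) (Fin m) K))
    (hS : S = Submodule.span K (Set.range (colSlices B)))
    (hS' : S' = Submodule.span K (Set.range (colSlices B')))
    (A : Matrix (Fin m) (Fin m) K) (B₂ : Matrix (Fin n) (Fin n) K)
    (hA : IsUnit A) (hB₂ : IsUnit B₂)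
    (hequiv : (C' : Set (Matrix (Fin m) (Fin n) K))
        = (fun M => Aᵀ * M * B₂) '' (C : Set (Matrix (Fin m) (Fin n) K))) :
    ∃ P : Matrix (Fin k) (Fin k) K, ∃ Q : Matrix (Fin m) (Fin m) K,
      IsUnit P ∧ IsUnit Q ∧
        (S' : Set (Matrix (Fin k) (Fin m) K))
          = (fun X => P * X * Q) '' (S : Set (Matrix (Fin k) (Fin m) K)) := by
  subst hC hC' hS hS'
  have hmem : ∀ i, ∃ c : Fin k → K, B' i = ∑ p, c p • (Aᵀ * B p * B₂) := fun i => by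
    have hi : B' i ∈ (Submodule.span K (Set.range B') : Set (Matrix (Fin m) (Fin n) K)) :=
      Submodule.subset_span (Set.mem_range_self i)
    rw [hequiv] at hi
    obtain ⟨M, hM, hMi⟩ := hi
    obtain ⟨c, rfl⟩ := (Submodule.mem_span_range_iff_exists_fun K).mp hM
    refine ⟨c, hMi.symm.trans ?_⟩
    simp [Matrix.mul_sum, Matrix.sum_mul]
  choose P hP using hmem
  refine ⟨Matrix.of P, A, isUnit_of_linearIndependent_sum_smul hB' hP, hA, ?_⟩
  let L : Matrix (Fin k) (Fin m) K →ₗ[K] Matrix (Fin k) (Fin m) K :=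
    { toFun := fun X => Matrix.of P * X * A
      map_add' := fun X Y => by rw [Matrix.mul_add, Matrix.add_mul]
      map_smul' := fun c X => by simp }
  have hslices : colSlices B' = fun l => ∑ b, B₂ b l • (L ∘ colSlices B) b :=
    funext (colSlices_eq_sum_smul (P := Matrix.of P) hP)
  rw [hslices, span_range_sum_smul_of_isUnit _ hB₂, Set.range_comp, ← Submodule.map_span,
    Submodule.map_coe]
  rfl
end

section
/- Let F be a finite field with q elements and let B₁,…,B_k ∈ F^{m×n} be a linearly independent family of matrices generating a column-nondegenerate matrix rank-metric code C = span_F{B₁,…,B_k}, with associated column-system S. Let R ⊆ S \ {0} be a set of representatives of the one-dimensional subspaces of S, i.e., every nonzero X ∈ S can be written uniquely as X = λ X' with λ ∈ F \ {0} and X' ∈ R. Then for every u ∈ F^k, (q − 1) · |{X ∈ R : uX ≠ 0}| = q^n − q^{n − rank(Σᵢ uᵢBᵢ)}, where uX ∈ F^m denotes the product of the row vector u with the matrix X ∈ F^{k×m}. -/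
open Matrix

/-- Every element of the code `span{B i}` has its row space inside `perp c` as soon as `c` is a
linear relation between the column slices, so nondegeneracy forces the slices to be independent. -/
theorem linearIndependent_colSlices {K : Type*} [Field K] {m n k : ℕ}
    (B : Fin k → Matrix (Fin m) (Fin n) K)
    (hB : rowSupport (Submodule.span K (Set.range B)) = ⊤) :
    LinearIndependent K (colSlices B) := by
  rw [Fintype.linearIndependent_iff]
  intro c hc l
  have hle : rowSupport (Submodule.span K (Set.range B)) ≤ perp c := by
    refine iSup₂_le fun M hM => Submodule.span_le.2 ?_
    rintro _ ⟨j, rfl⟩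
    induction hM using Submodule.span_induction with
    | mem M hM =>
      obtain ⟨i, rfl⟩ := hM
      change ∑ l, c l * B i j l = 0
      simpa [Matrix.sum_apply, colSlices] using congrFun (congrFun hc i) j
    | zero => exact (perp c).zero_mem
    | add M N _ _ hM hN => exact (perp c).add_mem hM hN
    | smul a M _ hM => exact (perp c).smul_mem a hM
  have hl : Pi.single l (1 : K) ∈ perp c := hle (hB ▸ Submodule.mem_top)
  have hlsum : ∑ i, c i * (Pi.single l (1 : K) : Fin n → K) i = 0 := hl
  simpa [Pi.single_apply] using hlsum

/-- Multiplying a combination of column slices by `u` is applying `∑ i, u i • B i` to the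
coefficient vector. -/
theorem vecMul_sum_smul_colSlices {K : Type*} [Field K] {m n k : ℕ}
    (B : Fin k → Matrix (Fin m) (Fin n) K) (u : Fin k → K) (c : Fin n → K) :
    u ᵥ* (∑ l, c l • colSlices B l) = (∑ i, u i • B i) *ᵥ c := by
  ext j
  simp only [Matrix.vecMul, Matrix.mulVec, dotProduct, Matrix.sum_apply, Matrix.smul_apply,
    colSlices, Matrix.of_apply, smul_eq_mul, Finset.mul_sum, Finset.sum_mul]
  rw [Finset.sum_comm]
  exact Finset.sum_congr rfl fun _ _ => Finset.sum_congr rfl fun _ _ => by ring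

/-- The number of vectors outside the kernel of a matrix over a finite field. -/
theorem card_mulVec_ne_zero {K : Type*} [Field K] [Fintype K] {m n : ℕ}
    (M : Matrix (Fin m) (Fin n) K) :
    (Nat.card {c : Fin n → K // M *ᵥ c ≠ 0} : ℤ)
      = (Fintype.card K : ℤ) ^ n - (Fintype.card K : ℤ) ^ (n - M.rank) := by
  classical
  have hrank : Module.finrank K (LinearMap.ker M.mulVecLin) = n - M.rank := by
    have := LinearMap.finrank_range_add_finrank_ker M.mulVecLin
    rw [Module.finrank_fin_fun] at this
    rw [Matrix.rank]
    omega
  have hker : Nat.card {c : Fin n → K // M *ᵥ c = 0} = Fintype.card K ^ (n - M.rank) := by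
    rw [← hrank, ← Nat.card_eq_fintype_card, ← Module.natCard_eq_pow_finrank]
    exact Nat.card_congr (Equiv.subtypeEquivRight fun c => by simp)
  have hsum := Nat.card_congr (Equiv.sumCompl fun c : Fin n → K => M *ᵥ c = 0)
  rw [Nat.card_sum, hker, Nat.card_fun, Nat.card_fin, Nat.card_eq_fintype_card (α := K)] at hsum
  have hcast := congrArg (Nat.cast : ℕ → ℤ) hsum
  push_cast at hcast
  exact eq_sub_of_add_eq' hcast

/-- If `R` represents the lines of `S`, the vectors of `S` outside the kernel of a linear map are
the nonzero multiples of the representatives outside that kernel. -/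
theorem card_units_mul_card_representatives {K V W : Type*} [Field K]
    [AddCommGroup V] [Module K V] [AddCommGroup W] [Module K W] (S : Submodule K V) (R : Set V)
    (hRS : R ⊆ S)
    (hR : ∀ Z ∈ S, Z ≠ 0 → ∃! p : K × V, p.1 ≠ 0 ∧ p.2 ∈ R ∧ Z = p.1 • p.2) (f : V →ₗ[K] W) :
    Nat.card Kˣ * Nat.card {X : V // X ∈ R ∧ f X ≠ 0} = Nat.card {Z : V // Z ∈ S ∧ f Z ≠ 0} := by
  rw [← Nat.card_prod]
  have hne : ∀ Z, f Z ≠ 0 → Z ≠ 0 := by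
    rintro _ hZ rfl
    exact hZ (map_zero f)
  have hmem : ∀ p : Kˣ × {X : V // X ∈ R ∧ f X ≠ 0},
      (p.1 : K) • (p.2 : V) ∈ S ∧ f ((p.1 : K) • (p.2 : V)) ≠ 0 := fun p =>
    ⟨S.smul_mem _ (hRS p.2.2.1), by
      rw [map_smul]
      exact smul_ne_zero p.1.ne_zero p.2.2.2⟩
  refine Nat.card_congr (Equiv.ofBijective (fun p => ⟨_, hmem p⟩) ⟨?_, ?_⟩)
  · rintro ⟨a, X, hX⟩ ⟨b, Y, hY⟩ h
    have hXY : (a : K) • X = (b : K) • Y := congrArg Subtype.val h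
    have hZ := hmem ⟨a, X, hX⟩
    have := (hR _ hZ.1 (hne _ hZ.2)).unique (y₁ := ((a : K), X)) (y₂ := ((b : K), Y))
      ⟨a.ne_zero, hX.1, rfl⟩ ⟨b.ne_zero, hY.1, hXY⟩
    obtain ⟨hab, rfl⟩ := Prod.mk.inj this
    obtain rfl := Units.ext hab
    rfl
  · rintro ⟨Z, hZ, hfZ⟩
    obtain ⟨⟨a, X⟩, ⟨ha, hX, rfl⟩, -⟩ := hR Z hZ (hne Z hfZ)
    have hfX : f X ≠ 0 := fun h => hfZ (by simp [h])
    exact ⟨⟨Units.mk0 a ha, X, hX, hfX⟩, rfl⟩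

/-- Let `R` be a set of representatives of the one-dimensional subspaces of
the column-system `S` associated with a column-nondegenerate code `C = span{B₁,…,B_k}`.
Then for every `u ∈ F^k`,
`(q − 1)·|{X ∈ R : uX ≠ 0}| = q^n − q^{n − rk(∑ i, uᵢ Bᵢ)}`. -/
theorem stmt19 {F : Type*} [Field F] [Fintype F] {m n k : ℕ}
    (hm : 0 < m) (hn : 0 < n) (hk : 0 < k)
    (q : ℕ) (hq : q = Fintype.card F)
    (B : Fin k → Matrix (Fin m) (Fin n) F) (hB : LinearIndependent F B)
    (C : Submodule F (Matrix (Fin m) (Fin n) F))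
    (hC : C = Submodule.span F (Set.range B))
    (hnd : rowSupport C = ⊤)
    (S : Submodule F (Matrix (Fin k) (Fin m) F))
    (hS : S = Submodule.span F (Set.range (colSlices B)))
    (R : Set (Matrix (Fin k) (Fin m) F))
    (hR1 : R ⊆ (S : Set (Matrix (Fin k) (Fin m) F)) \ {0})
    (hR2 : ∀ Z ∈ S, Z ≠ (0 : Matrix (Fin k) (Fin m) F) →
      ∃! p : F × Matrix (Fin k) (Fin m) F, p.1 ≠ 0 ∧ p.2 ∈ R ∧ Z = p.1 • p.2)
    (u : Fin k → F) :
    ((q : ℤ) - 1) *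
        (Nat.card {X : Matrix (Fin k) (Fin m) F // X ∈ R ∧ u ᵥ* X ≠ 0} : ℤ)
      = (q : ℤ) ^ n - (q : ℤ) ^ (n - (∑ i, u i • B i).rank) := by
  subst hq hC hS
  have hinj := linearIndependent_colSlices B hnd
  have hcount := card_units_mul_card_representatives _ R (fun X hX => (hR1 hX).1) hR2
    (Matrix.vecMulBilin F F u)
  have hcoeff : Nat.card {c : Fin n → F // (∑ i, u i • B i) *ᵥ c ≠ 0}
      = Nat.card {Z : Matrix (Fin k) (Fin m) F //
          Z ∈ Submodule.span F (Set.range (colSlices B)) ∧ u ᵥ* Z ≠ 0} := by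
    refine Nat.card_congr (Equiv.ofBijective (fun c => ⟨∑ l, c.1 l • colSlices B l,
      (Submodule.mem_span_range_iff_exists_fun F).2 ⟨c.1, rfl⟩, by
        rw [vecMul_sum_smul_colSlices]
        exact c.2⟩) ⟨?_, ?_⟩)
    · rintro ⟨c, _⟩ ⟨d, _⟩ h
      exact Subtype.ext (hinj.fintypeLinearCombination_injective (congrArg Subtype.val h))
    · rintro ⟨Z, hZ, huZ⟩
      obtain ⟨c, rfl⟩ := (Submodule.mem_span_range_iff_exists_fun F).1 hZ
      exact ⟨⟨c, by rwa [vecMul_sum_smul_colSlices] at huZ⟩, rfl⟩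
  have hunits : (Nat.card Fˣ : ℤ) = (Fintype.card F : ℤ) - 1 := by
    rw [Nat.card_units, Nat.card_eq_fintype_card, Nat.cast_sub Fintype.card_pos, Nat.cast_one]
  rw [← card_mulVec_ne_zero, hcoeff, ← hunits]
  exact_mod_cast hcount
end
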